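/- For all complex w = u + iv with u + |v| ≥ -1/2, the integral of t²/(1+t) along the straight segment from 0 to w satisfies |∫₀^w t²/(1+t) dt| ≤ (3/4)|w|². -/

import Mathlib

open Complex

/-!
By conjugation it suffices to treat `w = u + iv` with `v ≥ 0`. In two regions a pointwise bound of
the integrand is enough: for `|w| ≤ 9/10` (`small`) the path stays far enough from the singularity
`-1`, and in the sector `v ≥ -(9/10) u` (`sect`) one has `|tw / (1 + tw)| ≤ 3/2`.

What remains is the bounded region `U` cut out of the upper half-plane by `u + v > -1/2`,
`|w| > 9/10` and `v < -(9/10) u`. There the absolute value cannot be taken inside the integral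
(at `w = -1 + i/2` this already gives too large a bound). Instead, since the integral equals
`log (1 + w) - w + w²/2` (`formula`), the maximum modulus principle is applied to the holomorphic
function `(log (1 + w) - w + w²/2) / w²` on `U` (`upper`). The frontier of `U` consists of an arc
covered by `small`, a segment covered by `sect`, and a segment of the line `u + v = -1/2`.

On that line (`line`), with `v` as parameter, the real and imaginary parts are
`log (1/4 - v + 2v²) / 2 + 5/8 + 3v/2` and `arg (1 + w) - 3v/2 - v²`. Bounding the logarithm by one
of its tangents and the argument by a linear function of `v` turns the claim into inequalities
between polynomials of degree 4 in `v` on subintervals of `[0.33, 5]` (`cell1` to `cell8`).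
-/

/-! ### Elementary bounds for arctangent, argument and logarithm -/

/-- The Taylor bounds `x - x³/3 ≤ arctan x ≤ x` for `x ≥ 0`. -/
lemma arctan_bounds {x : ℝ} (hx : 0 ≤ x) :
    x - x ^ 3 / 3 ≤ Real.arctan x ∧ Real.arctan x ≤ x := by
  have hd : ∀ y : ℝ, HasDerivAt (fun y => Real.arctan y - (y - y ^ 3 / 3))
      (1 / (1 + y ^ 2) - (1 - y ^ 2)) y := by
    intro y
    have h := (Real.hasDerivAt_arctan y).sub
      ((hasDerivAt_id' y).sub ((hasDerivAt_pow 3 y).div_const 3))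
    exact h.congr_deriv (by push_cast; ring)
  have hd' : ∀ y : ℝ, HasDerivAt (fun y => y - Real.arctan y) (1 - 1 / (1 + y ^ 2)) y :=
    fun y => (hasDerivAt_id' y).sub (Real.hasDerivAt_arctan y)
  have hm : Monotone (fun y => Real.arctan y - (y - y ^ 3 / 3)) := by
    refine monotone_of_deriv_nonneg (fun y => (hd y).differentiableAt) fun y => ?_
    rw [(hd y).deriv, sub_nonneg, le_div_iff₀ (by positivity)]
    nlinarith [sq_nonneg (y ^ 2)]
  have hm' : Monotone (fun y => y - Real.arctan y) := by
    refine monotone_of_deriv_nonneg (fun y => (hd' y).differentiableAt) fun y => ?_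
    rw [(hd' y).deriv, sub_nonneg, div_le_one (by positivity)]
    nlinarith [sq_nonneg y]
  have h := hm hx
  have h' := hm' hx
  simp at h h'
  exact ⟨by linarith, h'⟩

lemma arg_eq {z : ℂ} (hz : 0 < z.im) :
    arg z = Real.pi / 2 - Real.arctan (z.re / z.im) := by
  have h1 : 0 < arg z := by
    rcases (arg_nonneg_iff.2 hz.le).lt_or_eq with h | h
    · exact h
    · exact absurd ((arg_eq_zero_iff.1 h.symm).2) hz.ne'
  have h2 : arg z < Real.pi := arg_lt_pi_iff.2 (Or.inr hz.ne')
  have h3 : Real.tan (Real.pi / 2 - arg z) = z.re / z.im := by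
    rw [Real.tan_pi_div_two_sub, tan_arg, inv_div]
  rw [← h3, Real.arctan_tan (by linarith) (by linarith)]
  ring

/-- By concavity the logarithm lies below its tangent at `c`, and `M` may replace `log c`. -/
lemma log_le_tangent {q c M : ℝ} (hq : 0 < q) (hc : 0 < c) (hM : Real.log c ≤ M) :
    Real.log q ≤ q / c - 1 + M := by
  have := Real.log_le_sub_one_of_pos (div_pos hq hc)
  rw [Real.log_div hq.ne' hc.ne'] at this
  linarith

/-- Numerical bounds for `log c` at the points of tangency. These are powers of `√2` or
rational approximations of them from below, so that `log c` is within
reach of the known digits of `log 2`. -/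
lemma log_c1 : Real.log (1/4) ≤ -1.386 := by
  have := Real.log_two_gt_d9
  rw [show (1/4:ℝ) = ((2:ℝ)^2)⁻¹ by norm_num, Real.log_inv, Real.log_pow]
  push_cast; linarith
lemma log_c2 : Real.log (707 / 2000) ≤ -1.039 := by
  have := Real.log_two_gt_d9
  have h : Real.log ((707 / 2000) ^ 2) ≤ Real.log (((2:ℝ)^3)⁻¹) := Real.log_le_log (by norm_num) (by norm_num)
  rw [Real.log_inv, Real.log_pow, Real.log_pow] at h
  push_cast at h; linarith
lemma log_c3 : Real.log (1/2) ≤ -0.693 := by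
  have := Real.log_two_gt_d9
  rw [one_div, Real.log_inv]; linarith
lemma log_c4 : Real.log (707 / 250) ≤ 1.04 := by
  have := Real.log_two_lt_d9
  have h : Real.log ((707 / 250) ^ 2) ≤ Real.log ((2:ℝ)^3) := Real.log_le_log (by norm_num) (by norm_num)
  rw [Real.log_pow, Real.log_pow] at h
  push_cast at h; linarith

/-! ### Polynomial inequalities along the boundary line -/

/-- The inequality `U² + V² ≤ P²` on one interval of `v`. Here `U` bounds the real part (tangent of
the logarithm at `1/4`), `V` bounds the imaginary part, and `P = (3/4)|w|²`. The difference has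
degree 4 and, on the interval, nonnegative coefficients in the Bernstein basis `aⁱ b⁴⁻ⁱ`; the same
certificate serves for `cell2` to `cell8`, with other points of tangency and other bounds of
the imaginary part. -/
lemma cell1 {v : ℝ} (hl : 0.33 ≤ v) (hh : v ≤ 0.45) :
    (((1 / 4 - v + 2 * v ^ 2) / (1 / 4) - 1 + -1.386) / 2 + 5 / 8 + 3 / 2 * v) ^ 2
      + (0.18 + 2.9 * v - 3 / 2 * v - v ^ 2) ^ 2 ≤ (3 / 4 * (1 / 4 + v + 2 * v ^ 2)) ^ 2 := by
  have a := sub_nonneg.2 hl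
  have b := sub_nonneg.2 hh
  nlinarith [pow_nonneg a 4, pow_nonneg b 4, mul_nonneg a (pow_nonneg b 3),
    mul_nonneg b (pow_nonneg a 3), mul_nonneg (pow_nonneg a 2) (pow_nonneg b 2)]

lemma cell2 {v : ℝ} (hl : 0.45 ≤ v) (hh : v ≤ 0.55) :
    (((1 / 4 - v + 2 * v ^ 2) / (1 / 4) - 1 + -1.386) / 2 + 5 / 8 + 3 / 2 * v) ^ 2
      + (1.571 + 2 * v - 1 - 3 / 2 * v - v ^ 2) ^ 2 ≤ (3 / 4 * (1 / 4 + v + 2 * v ^ 2)) ^ 2 := by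
  have a := sub_nonneg.2 hl
  have b := sub_nonneg.2 hh
  nlinarith [pow_nonneg a 4, pow_nonneg b 4, mul_nonneg a (pow_nonneg b 3),
    mul_nonneg b (pow_nonneg a 3), mul_nonneg (pow_nonneg a 2) (pow_nonneg b 2)]

lemma cell3 {v : ℝ} (hl : 0.55 ≤ v) (hh : v ≤ 0.62) :
    (((1 / 4 - v + 2 * v ^ 2) / (707 / 2000) - 1 + -1.039) / 2 + 5 / 8 + 3 / 2 * v) ^ 2
      + (1.571 + 2 * v - 1 - 3 / 2 * v - v ^ 2) ^ 2 ≤ (3 / 4 * (1 / 4 + v + 2 * v ^ 2)) ^ 2 := by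
  have a := sub_nonneg.2 hl
  have b := sub_nonneg.2 hh
  nlinarith [pow_nonneg a 4, pow_nonneg b 4, mul_nonneg a (pow_nonneg b 3),
    mul_nonneg b (pow_nonneg a 3), mul_nonneg (pow_nonneg a 2) (pow_nonneg b 2)]

lemma cell4 {v : ℝ} (hl : 0.62 ≤ v) (hh : v ≤ 0.8) :
    (((1 / 4 - v + 2 * v ^ 2) / (1 / 2) - 1 + -0.693) / 2 + 5 / 8 + 3 / 2 * v) ^ 2
      + (1.22 + 0.914 * v - 3 / 2 * v - v ^ 2) ^ 2 ≤ (3 / 4 * (1 / 4 + v + 2 * v ^ 2)) ^ 2 := by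
  have a := sub_nonneg.2 hl
  have b := sub_nonneg.2 hh
  nlinarith [pow_nonneg a 4, pow_nonneg b 4, mul_nonneg a (pow_nonneg b 3),
    mul_nonneg b (pow_nonneg a 3), mul_nonneg (pow_nonneg a 2) (pow_nonneg b 2)]

lemma cell5 {v : ℝ} (hl : 0.62 ≤ v) (hh : v ≤ 0.8) :
    (((1 / 4 - v + 2 * v ^ 2) / (1 / 2) - 1 + -0.693) / 2 + 5 / 8 + 3 / 2 * v) ^ 2
      + (1.57 - 3 / 2 * v - v ^ 2) ^ 2 ≤ (3 / 4 * (1 / 4 + v + 2 * v ^ 2)) ^ 2 := by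
  have a := sub_nonneg.2 hl
  have b := sub_nonneg.2 hh
  nlinarith [pow_nonneg a 4, pow_nonneg b 4, mul_nonneg a (pow_nonneg b 3),
    mul_nonneg b (pow_nonneg a 3), mul_nonneg (pow_nonneg a 2) (pow_nonneg b 2)]

lemma cell6 {v : ℝ} (hl : 0.8 ≤ v) (hh : v ≤ 1.1) :
    (((1 / 4 - v + 2 * v ^ 2) / 1 - 1 + 0) / 2 + 5 / 8 + 3 / 2 * v) ^ 2
      + (0.11) ^ 2 ≤ (3 / 4 * (1 / 4 + v + 2 * v ^ 2)) ^ 2 := by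
  have a := sub_nonneg.2 hl
  have b := sub_nonneg.2 hh
  nlinarith [pow_nonneg a 4, pow_nonneg b 4, mul_nonneg a (pow_nonneg b 3),
    mul_nonneg b (pow_nonneg a 3), mul_nonneg (pow_nonneg a 2) (pow_nonneg b 2)]

lemma cell7 {v : ℝ} (hl : 0.8 ≤ v) (hh : v ≤ 1.1) :
    (((1 / 4 - v + 2 * v ^ 2) / 1 - 1 + 0) / 2 + 5 / 8 + 3 / 2 * v) ^ 2
      + (1.92 - 3 / 2 * v - v ^ 2) ^ 2 ≤ (3 / 4 * (1 / 4 + v + 2 * v ^ 2)) ^ 2 := by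
  have a := sub_nonneg.2 hl
  have b := sub_nonneg.2 hh
  nlinarith [pow_nonneg a 4, pow_nonneg b 4, mul_nonneg a (pow_nonneg b 3),
    mul_nonneg b (pow_nonneg a 3), mul_nonneg (pow_nonneg a 2) (pow_nonneg b 2)]

lemma cell8 {v : ℝ} (hl : 1.1 ≤ v) (hh : v ≤ 5) :
    (((1 / 4 - v + 2 * v ^ 2) / (707 / 250) - 1 + 1.04) / 2 + 5 / 8 + 3 / 2 * v) ^ 2
      + (1.92 - 3 / 2 * v - v ^ 2) ^ 2 ≤ (3 / 4 * (1 / 4 + v + 2 * v ^ 2)) ^ 2 := by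
  have a := sub_nonneg.2 hl
  have b := sub_nonneg.2 hh
  nlinarith [pow_nonneg a 4, pow_nonneg b 4, mul_nonneg a (pow_nonneg b 3),
    mul_nonneg b (pow_nonneg a 3), mul_nonneg (pow_nonneg a 2) (pow_nonneg b 2)]

/-! ### The inequality on the boundary line -/

/-- The estimate behind the linear bound `arg (1 + w) ≤ 0.18 + 2.9 v` for `w = -1/2 - v + iv`: the
argument is `π/2 - arctan x` with `x = (1/2 - v)/v`, and `arctan x ≥ x - x³/3`. -/
lemma arg_bound_cell1 {v x : ℝ} (hx0 : 0 ≤ x) (hx1 : x ≤ 0.52) (hxv : x * v = 1 / 2 - v) :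
    1.391 ≤ x - x ^ 3 / 3 + 2.9 * v := by
  have hvx : v = 1 / (2 * (1 + x)) := by field_simp; linarith
  rw [hvx, ← sub_nonneg]
  have : x - x ^ 3 / 3 + 2.9 * (1 / (2 * (1 + x))) - 1.391
      = ((x - x ^ 3 / 3 - 1.391) * (1 + x) + 1.45) / (1 + x) := by field_simp; ring
  rw [this]
  refine div_nonneg ?_ (by linarith)
  nlinarith [sq_nonneg (x - 0.22), mul_nonneg hx0 (sub_nonneg.2 hx1),
    mul_nonneg (mul_nonneg hx0 hx0) (sub_nonneg.2 hx1), pow_nonneg hx0 3,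
    mul_nonneg (pow_nonneg hx0 3) (sub_nonneg.2 hx1)]

/-- For `v ≥ 9/20` and `x = (1/2 - v)/v`, the bound `π/2 + 2v - 1` for `arg (1 + w)` with
`w = -1/2 - v + iv`, again written in terms of the Taylor polynomial of `arctan x`. -/
lemma arg_bound_cell2 {v x : ℝ} (hx0 : 0 ≤ x) (hv : 0.45 ≤ v) (hxv : x * v = 1 / 2 - v) :
    1 - 2 * v ≤ x - x ^ 3 / 3 := by
  have hx1 : x ≤ 0.2 := by nlinarith
  have hvx : v = 1 / (2 * (1 + x)) := by field_simp; linarith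
  have e : 1 - 2 * v = x / (1 + x) := by rw [hvx]; field_simp; ring
  rw [e, div_le_iff₀ (by linarith)]
  nlinarith [mul_nonneg (mul_nonneg hx0 hx0) (sub_nonneg.2 hx1), mul_nonneg hx0 hx0,
    mul_nonneg (pow_nonneg hx0 3) (sub_nonneg.2 hx1)]

/-- Combines bounds on the real part `X` and on the imaginary part `Y`, where `Y` may be
estimated differently according to its sign. -/
lemma sq_add_sq_le {X Y U V W P : ℝ} (hX : 0 ≤ X) (hU : X ≤ U) (hV : Y ≤ V)
    (hW : W ≤ Y) (h : U ^ 2 + V ^ 2 ≤ P ^ 2) (h' : Y ≤ 0 → U ^ 2 + W ^ 2 ≤ P ^ 2) :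
    X ^ 2 + Y ^ 2 ≤ P ^ 2 := by
  have h1 := pow_le_pow_left₀ hX hU 2
  rcases le_total 0 Y with hY | hY
  · have h2 := pow_le_pow_left₀ hY hV 2
    linarith
  · have h2 := pow_le_pow_left₀ (neg_nonneg.2 hY) (neg_le_neg hW) 2
    rw [neg_sq, neg_sq] at h2
    linarith [h' hY]

/-- The case of `sq_add_sq_le` where the imaginary part is nonnegative. -/
lemma sq_add_sq_le_of_nonneg {X Y U V P : ℝ} (hX : 0 ≤ X) (hU : X ≤ U) (hY : 0 ≤ Y)
    (hV : Y ≤ V) (h : U ^ 2 + V ^ 2 ≤ P ^ 2) : X ^ 2 + Y ^ 2 ≤ P ^ 2 :=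
  (add_le_add (pow_le_pow_left₀ hX hU 2) (pow_le_pow_left₀ hY hV 2)).trans h

/-- On the line `u + v = -1/2`, the real part of `log (1 + w) - w + w²/2` is nonnegative and is
bounded above by replacing the logarithm with its tangent at `c`. -/
lemma re_bounds {v : ℝ} (h1 : 0.33 ≤ v) :
    0 ≤ Real.log (1 / 4 - v + 2 * v ^ 2) / 2 + 5 / 8 + 3 / 2 * v ∧
    ∀ c M : ℝ, 0 < c → Real.log c ≤ M →
      Real.log (1 / 4 - v + 2 * v ^ 2) / 2 + 5 / 8 + 3 / 2 * v
        ≤ ((1 / 4 - v + 2 * v ^ 2) / c - 1 + M) / 2 + 5 / 8 + 3 / 2 * v := by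
  have hq8 : 1 / 8 ≤ 1 / 4 - v + 2 * v ^ 2 := by nlinarith [sq_nonneg (v - 1 / 4)]
  refine ⟨?_, fun c M hc hM => ?_⟩
  · have h := Real.log_le_log (by norm_num) hq8
    rw [show (1 / 8 : ℝ) = ((2 : ℝ) ^ 3)⁻¹ by norm_num, Real.log_inv, Real.log_pow] at h
    have := Real.log_two_lt_d9
    push_cast at h
    linarith
  · have := log_le_tangent (lt_of_lt_of_le (by norm_num) hq8) hc hM
    linarith

/-- The part of the line on which `1 + w` lies in the closed right half-plane;
`φ` is `arg (1 + w)`. -/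
lemma line_right {v φ : ℝ} (h1 : 0.33 ≤ v) (h : v ≤ 0.5)
    (hφ : φ = Real.pi / 2 - Real.arctan ((1 / 2 - v) / v)) :
    (Real.log (1 / 4 - v + 2 * v ^ 2) / 2 + 5 / 8 + 3 / 2 * v) ^ 2
      + (φ - 3 / 2 * v - v ^ 2) ^ 2 ≤ (3 / 4 * (1 / 4 + v + 2 * v ^ 2)) ^ 2 := by
  have hv : 0 < v := by linarith
  have pu := Real.pi_lt_d4
  have pl := Real.pi_gt_d4
  obtain ⟨hX, hU⟩ := re_bounds h1
  obtain ⟨x, hx⟩ : ∃ x, x = (1 / 2 - v) / v := ⟨_, rfl⟩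
  rw [← hx] at hφ
  have hxv : x * v = 1 / 2 - v := by rw [hx]; field_simp
  have hx0 : 0 ≤ x := by rw [hx]; exact div_nonneg (by linarith) hv.le
  obtain ⟨ha, hb⟩ := arctan_bounds hx0
  have hY : 0 ≤ φ - 3 / 2 * v - v ^ 2 := by
    have : x ≤ 1.57 - 3 / 2 * v - v ^ 2 := by
      rw [hx, div_le_iff₀ hv]
      nlinarith [mul_nonneg (sub_nonneg.2 h1) (sub_nonneg.2 h)]
    linarith
  rcases le_total v 0.45 with h' | h'
  · have hx1 : x ≤ 0.52 := by rw [hx, div_le_iff₀ hv]; linarith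
    have := arg_bound_cell1 hx0 hx1 hxv
    exact sq_add_sq_le_of_nonneg hX (hU _ _ (by norm_num) log_c1) hY (by linarith) (cell1 h1 h')
  · have := arg_bound_cell2 hx0 h' hxv
    exact sq_add_sq_le_of_nonneg hX (hU _ _ (by norm_num) log_c1) hY (by linarith)
      (cell2 h' (by linarith))

/-- The part of the line on which `1 + w` lies in the closed left half-plane;
`φ` is `arg (1 + w)`. -/
lemma line_left {v φ : ℝ} (h : 0.5 ≤ v) (h5 : v ≤ 5)
    (hφ : φ = Real.pi / 2 + Real.arctan ((v - 1 / 2) / v)) :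
    (Real.log (1 / 4 - v + 2 * v ^ 2) / 2 + 5 / 8 + 3 / 2 * v) ^ 2
      + (φ - 3 / 2 * v - v ^ 2) ^ 2 ≤ (3 / 4 * (1 / 4 + v + 2 * v ^ 2)) ^ 2 := by
  have hv : 0 < v := by linarith
  have pu := Real.pi_lt_d4
  have pl := Real.pi_gt_d4
  obtain ⟨hX, hU⟩ := re_bounds (show 0.33 ≤ v by linarith)
  obtain ⟨x, hx⟩ : ∃ x, x = (v - 1 / 2) / v := ⟨_, rfl⟩
  rw [← hx] at hφ
  have hx0 : 0 ≤ x := by rw [hx]; exact div_nonneg (by linarith) hv.le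
  obtain ⟨-, hb⟩ := arctan_bounds hx0
  have hA0 : 0 ≤ Real.arctan x := Real.arctan_nonneg.2 hx0
  -- `x = 1 - 1/(2v)` is a concave function of `v`, hence lies below its tangents.
  have htan : ∀ m : ℝ, 0 < m → x ≤ 1 - 1 / m + v / (2 * m ^ 2) := by
    intro m hm
    have h1 : 1 - 1 / m + v / (2 * m ^ 2) - x = (v - m) ^ 2 / (2 * m ^ 2 * v) := by
      rw [hx]; field_simp; ring
    have h2 : 0 ≤ (v - m) ^ 2 / (2 * m ^ 2 * v) := by positivity
    linarith
  rcases le_total v 0.62 with h' | h'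
  · have t : x ≤ 2 * v - 1 := (htan (1 / 2) (by norm_num)).trans_eq (by ring)
    have hY : 0 ≤ φ - 3 / 2 * v - v ^ 2 := by
      have : v ^ 2 ≤ 0.62 ^ 2 := pow_le_pow_left₀ hv.le h' 2
      linarith
    rcases le_total v 0.55 with h'' | h''
    · exact sq_add_sq_le_of_nonneg hX (hU _ _ (by norm_num) log_c1) hY (by linarith)
        (cell2 (by linarith) h'')
    · exact sq_add_sq_le_of_nonneg hX (hU _ _ (by norm_num) log_c2) hY (by linarith)
        (cell3 h'' h')
  rcases le_total v 0.8 with h'' | h''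
  · have t := htan 0.74 (by norm_num)
    have t' : x ≤ -0.351 + 0.914 * v := by norm_num at t; linarith
    exact sq_add_sq_le hX (hU _ _ (by norm_num) log_c3) (by linarith) (by linarith)
      (cell4 h' h'') (fun _ => cell5 h' h'')
  have hx1 : 3 / 8 ≤ x := by rw [hx, le_div_iff₀ hv]; linarith
  have hφ2 : 1.92 ≤ φ := by
    have hm : Real.arctan (3 / 8) ≤ Real.arctan x := Real.arctan_strictMono.monotone hx1
    have := (arctan_bounds (show (0 : ℝ) ≤ 3 / 8 by norm_num)).1
    norm_num at this
    linarith
  have t := htan 0.8 (by norm_num)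
  have t' : x ≤ -0.25 + 0.7813 * v := by norm_num at t; linarith
  have hY : φ - 3 / 2 * v - v ^ 2 ≤ 0.11 := by nlinarith
  rcases le_total v 1.1 with h3 | h3
  · exact sq_add_sq_le hX (hU 1 0 (by norm_num) (by simp)) hY (by linarith)
      (cell6 h'' h3) (fun _ => cell7 h'' h3)
  · have hY' : φ - 3 / 2 * v - v ^ 2 ≤ 0 := by nlinarith
    have key := cell8 h3 h5
    exact sq_add_sq_le hX (hU _ _ (by norm_num) log_c4) hY' (by linarith)
      (le_trans (by simp; positivity) key) (fun _ => key)

/-! ### Pointwise estimates of the integrand -/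

/-- Near the origin: `|1 + tw| ≥ (1 - t/2)/√2`, hence `1/|1 + tw| ≤ 1.415 (1 + t)`, and the integral
is at most `1.415 (1/3 + 1/4) |w|³`, where `|w| ≤ 9/10`. -/
lemma small (w : ℂ) (hw : w.re + |w.im| ≥ -1/2) (hr : ‖w‖ ≤ 9/10) :
    ‖∫ t in (0:ℝ)..1, w * (((t : ℂ) * w)^2 / (1 + (t : ℂ) * w))‖ ≤ 3/4 * ‖w‖^2 := by
  have hb := intervalIntegral.norm_integral_le_of_norm_le (μ := MeasureTheory.volume)
    (f := fun t : ℝ => w * (((t : ℂ) * w)^2 / (1 + (t : ℂ) * w)))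
    (g := fun t : ℝ => 1.415 * ‖w‖ ^ 3 * (t ^ 2 + t ^ 3)) zero_le_one
    (Filter.Eventually.of_forall fun t ht => ?_)
    (Continuous.intervalIntegrable (by fun_prop) _ _)
  · refine hb.trans ?_
    rw [intervalIntegral.integral_const_mul, intervalIntegral.integral_add
      (Continuous.intervalIntegrable (by fun_prop) _ _)
      (Continuous.intervalIntegrable (by fun_prop) _ _), integral_pow, integral_pow]
    norm_num
    nlinarith [mul_le_mul_of_nonneg_left hr (sq_nonneg ‖w‖)]
  · obtain ⟨h0, h1⟩ := ht
    have hsq : ‖1 + (t : ℂ) * w‖ ^ 2 = (1 + t * w.re) ^ 2 + (t * |w.im|) ^ 2 := by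
      rw [← normSq_eq_norm_sq, normSq_apply, mul_pow t, sq_abs]
      simp
      ring
    have hv := abs_nonneg w.im
    -- `1 + tw` is at distance at least `(1 - t/2)/√2` from `0`, and `(1 - t/2)(1 + t) ≥ 1`.
    have hlow : 1 ≤ 1.415 * (1 + t) * ‖1 + (t : ℂ) * w‖ := by
      rw [← one_le_sq_iff₀ (by positivity), mul_pow, hsq]
      have h2 : 1 - t / 2 ≤ (1 + t * w.re) + t * |w.im| := by nlinarith
      have h3 : (1 - t / 2) ^ 2 ≤ ((1 + t * w.re) + t * |w.im|) ^ 2 :=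
        pow_le_pow_left₀ (by linarith) h2 2
      have h4 : 1 ≤ ((1 + t) * (1 - t / 2)) ^ 2 := one_le_pow₀ (by nlinarith)
      have h5 : (1 - t / 2) ^ 2 / 2 ≤ (1 + t * w.re) ^ 2 + (t * |w.im|) ^ 2 := by
        nlinarith [sq_nonneg ((1 + t * w.re) - t * |w.im|)]
      have h6 := mul_le_mul_of_nonneg_left h5 (sq_nonneg (1.415 * (1 + t)))
      nlinarith
    have hpos : 0 < ‖1 + (t : ℂ) * w‖ := by
      by_contra h
      have : ‖1 + (t : ℂ) * w‖ = 0 := le_antisymm (not_lt.1 h) (norm_nonneg _)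
      rw [this] at hlow
      norm_num at hlow
    rw [norm_mul, norm_div, norm_pow, norm_mul, norm_real, Real.norm_of_nonneg h0.le,
      mul_div_assoc', div_le_iff₀ hpos]
    have := mul_le_mul_of_nonneg_left hlow (by positivity : 0 ≤ ‖w‖ ^ 3 * t ^ 2)
    linarith

/-- Away from the negative real axis: either `u ≥ 0`, or the sine of the angle between `w` and the
negative real axis is at least `2/3`. In both cases `|tw| ≤ (3/2) |1 + tw|`, so the integral is at most
`(3/2) |w|² ∫ t`. -/
lemma sect (w : ℂ) (hw : -(9/10) * w.re ≤ |w.im|) :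
    ‖∫ t in (0:ℝ)..1, w * (((t : ℂ) * w)^2 / (1 + (t : ℂ) * w))‖ ≤ 3/4 * ‖w‖^2 := by
  have hb := intervalIntegral.norm_integral_le_of_norm_le (μ := MeasureTheory.volume)
    (f := fun t : ℝ => w * (((t : ℂ) * w)^2 / (1 + (t : ℂ) * w)))
    (g := fun t : ℝ => 3 / 2 * ‖w‖ ^ 2 * t) zero_le_one
    (Filter.Eventually.of_forall fun t ht => ?_)
    (Continuous.intervalIntegrable (by fun_prop) _ _)
  · refine hb.trans ?_
    rw [intervalIntegral.integral_const_mul, integral_id]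
    norm_num
    nlinarith
  · obtain ⟨h0, h1⟩ := ht
    have hsq : ‖1 + (t : ℂ) * w‖ ^ 2 = 1 + 2 * t * w.re + t ^ 2 * (w.re ^ 2 + w.im ^ 2) := by
      rw [← normSq_eq_norm_sq, normSq_apply]
      simp
      ring
    have hn : ‖w‖ ^ 2 = w.re ^ 2 + w.im ^ 2 := by
      rw [← normSq_eq_norm_sq, normSq_apply]; ring
    have hlow : t * ‖w‖ ≤ 3 / 2 * ‖1 + (t : ℂ) * w‖ := by
      rw [← pow_le_pow_iff_left₀ (by positivity) (by positivity) two_ne_zero, mul_pow, mul_pow,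
        hsq, hn]
      rcases le_total 0 w.re with hu | hu
      · nlinarith [mul_nonneg h0.le hu, mul_nonneg (sq_nonneg t) (sq_nonneg w.re),
          mul_nonneg (sq_nonneg t) (sq_nonneg w.im)]
      · have h2 := pow_le_pow_left₀ (by linarith) hw 2
        rw [sq_abs] at h2
        have h3 : 36 * w.re ^ 2 ≤ 45 * w.im ^ 2 := by nlinarith [sq_nonneg w.re]
        nlinarith [sq_nonneg (1 + t * w.re), mul_le_mul_of_nonneg_left h3 (sq_nonneg t)]
    rw [norm_mul, norm_div, norm_pow, norm_mul, norm_real, Real.norm_of_nonneg h0.le,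
      mul_div_assoc']
    refine div_le_of_le_mul₀ (norm_nonneg _) (by positivity) ?_
    have := mul_le_mul_of_nonneg_left hlow (by positivity : 0 ≤ ‖w‖ ^ 2 * t)
    linarith

/-! ### The closed form and the maximum modulus principle -/

/-- The primitive of `t²/(1 + t)`. The segment from `1` to `1 + w` stays in the slit plane because
`w` is not real. -/
lemma formula (w : ℂ) (hw : w.im ≠ 0) :
    ∫ t in (0:ℝ)..1, w * (((t : ℂ) * w)^2 / (1 + (t : ℂ) * w)) = log (1 + w) - w + w ^ 2 / 2 := by
  have hs : ∀ t : ℝ, 1 + (t : ℂ) * w ∈ slitPlane := by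
    intro t
    rcases eq_or_ne t 0 with rfl | ht
    · simp
    · right; simp [ht, hw]
  have hd : ∀ t ∈ Set.uIcc (0:ℝ) 1, HasDerivAt
      (fun t : ℝ => log (1 + (t : ℂ) * w) - t * w + (t * w) ^ 2 / 2)
      (w * (((t : ℂ) * w)^2 / (1 + (t : ℂ) * w))) t := by
    intro t _
    have h0 := slitPlane_ne_zero (hs t)
    have h1 : HasDerivAt (fun t : ℝ => (t : ℂ) * w) w t := by
      simpa using (ofRealCLM.hasDerivAt (x := t)).mul_const w
    have h2 := (((h1.const_add 1).clog_real (hs t)).sub h1).add ((h1.pow 2).div_const 2)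
    refine h2.congr_deriv ?_
    generalize (t : ℂ) * w = z at h0 ⊢
    push_cast
    field_simp
    ring
  rw [intervalIntegral.integral_eq_sub_of_hasDerivAt hd]
  · simp
  · refine Continuous.intervalIntegrable ?_ _ _
    have := fun t => slitPlane_ne_zero (hs t)
    fun_prop (disch := assumption)

/-- On the line `u + v = -1/2` the inequality is checked through explicit real and imaginary parts. -/
lemma line (w : ℂ) (hw : w.re + w.im = -1/2) (h1 : 0.33 ≤ w.im) (h5 : w.im ≤ 5) :
    ‖log (1 + w) - w + w ^ 2 / 2‖ ≤ 3/4 * ‖w‖^2 := by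
  obtain ⟨v, hv⟩ : ∃ v, v = w.im := ⟨_, rfl⟩
  have hu : w.re = -1/2 - v := by linarith
  have hn : ‖w‖ ^ 2 = 1 / 4 + v + 2 * v ^ 2 := by
    rw [← normSq_eq_norm_sq, normSq_apply, hu, ← hv]; ring
  have hn1 : ‖1 + w‖ ^ 2 = 1 / 4 - v + 2 * v ^ 2 := by
    rw [← normSq_eq_norm_sq, normSq_apply]
    simp only [add_re, one_re, add_im, one_im, hu, ← hv]; ring
  rw [← hv] at h1 h5
  have hlog : (log (1 + w)).re = Real.log (1 / 4 - v + 2 * v ^ 2) / 2 := by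
    rw [log_re, ← hn1, Real.log_pow]; push_cast; ring
  have hre : (1 + w).re = 1 / 2 - v := by rw [add_re, one_re, hu]; ring
  have him : (1 + w).im = v := by simp [hv]
  have harg := arg_eq (z := 1 + w) (by rw [him]; linarith)
  rw [hre, him] at harg
  rw [← pow_le_pow_iff_left₀ (norm_nonneg _) (by positivity) two_ne_zero, hn,
    ← normSq_eq_norm_sq, normSq_apply]
  have hR : (log (1 + w) - w + w ^ 2 / 2).re
      = Real.log (1 / 4 - v + 2 * v ^ 2) / 2 + 5 / 8 + 3 / 2 * v := by
    simp [hlog, sq, hu, ← hv]; ring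
  have hI : (log (1 + w) - w + w ^ 2 / 2).im = arg (1 + w) - 3 / 2 * v - v ^ 2 := by
    simp [log_im, sq, hu, ← hv]; ring
  rw [hR, hI, ← sq, ← sq]
  rcases le_total v 0.5 with h | h
  · exact line_right h1 h harg
  · refine line_left h h5 ?_
    rw [harg, show (1 / 2 - v) / v = -((v - 1 / 2) / v) by ring, Real.arctan_neg, sub_neg_eq_add]

/-- The inequality on the line, for points between the circle `|w| = 9/10` and the ray
`v = -(9/10) u`. -/
lemma line' (w : ℂ) (hw : w.re + w.im = -1/2) (hr : 9/10 ≤ ‖w‖) (h0 : 0 ≤ w.im)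
    (hs : w.im ≤ -(9/10) * w.re) :
    ‖log (1 + w) - w + w ^ 2 / 2‖ ≤ 3/4 * ‖w‖^2 := by
  have hn : ‖w‖ ^ 2 = w.re ^ 2 + w.im ^ 2 := by
    rw [← normSq_eq_norm_sq, normSq_apply]; ring
  have hu : w.re = -1/2 - w.im := by linarith
  rw [hu] at hn hs
  refine line w hw ?_ (by linarith)
  by_contra h
  push Not at h
  nlinarith [pow_le_pow_left₀ (by norm_num) hr 2]

/-- The inequality in the remaining region of the upper half-plane, by the maximum modulus
principle for `(log (1 + z) - z + z²/2) / z²`. -/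
lemma upper (w : ℂ) (hw : w.re + w.im ≥ -1/2) (hr : 9/10 < ‖w‖) (h0 : 0 < w.im)
    (hs : w.im < -(9/10) * w.re) :
    ‖log (1 + w) - w + w ^ 2 / 2‖ ≤ 3/4 * ‖w‖^2 := by
  rcases hw.lt_or_eq with hlt | heq
  swap
  · exact line' w heq.symm hr.le h0.le hs.le
  let U : Set ℂ := {z | -1/2 < z.re + z.im ∧ 9/10 < ‖z‖ ∧ 0 < z.im ∧ z.im < -(9/10) * z.re}
  let K : Set ℂ := {z | -1/2 ≤ z.re + z.im ∧ 9/10 ≤ ‖z‖ ∧ 0 ≤ z.im ∧ z.im ≤ -(9/10) * z.re}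
  have hU : IsOpen U := by
    refine IsOpen.and (isOpen_lt ?_ ?_) (IsOpen.and (isOpen_lt ?_ ?_)
      (IsOpen.and (isOpen_lt ?_ ?_) (isOpen_lt ?_ ?_))) <;> fun_prop
  have hK : IsClosed K := by
    refine IsClosed.and (isClosed_le ?_ ?_) (IsClosed.and (isClosed_le ?_ ?_)
      (IsClosed.and (isClosed_le ?_ ?_) (isClosed_le ?_ ?_))) <;> fun_prop
  have hUK : closure U ⊆ K :=
    closure_minimal (fun z hz => ⟨hz.1.le, hz.2.1.le, hz.2.2.1.le, hz.2.2.2.le⟩) hK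
  have hbd : Bornology.IsBounded U := by
    refine (Metric.isBounded_closedBall (x := (0 : ℂ)) (r := 10)).subset fun z hz => ?_
    obtain ⟨z1, -, z3, z4⟩ := hz
    -- `-1/2 - u < v < -(9/10) u` forces `-5 < u`.
    rw [mem_closedBall_zero_iff]
    refine (norm_le_abs_re_add_abs_im z).trans ?_
    rw [abs_of_nonpos (by linarith), abs_of_pos z3]
    linarith
  -- The closure of the region stays off the real axis, hence away from `0` and the branch cut.
  have him : ∀ z ∈ K, 0 < z.im := by
    rintro z ⟨z1, z2, z3, z4⟩
    refine z3.lt_of_ne' fun h => ?_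
    have hn : ‖z‖ ^ 2 = z.re ^ 2 + z.im ^ 2 := by
      rw [← normSq_eq_norm_sq, normSq_apply]; ring
    rw [h] at z1 z4 hn
    nlinarith [pow_le_pow_left₀ (by norm_num) z2 2]
  have hd : DiffContOnCl ℂ (fun z : ℂ => (log (1 + z) - z + z ^ 2 / 2) / z ^ 2) U := by
    refine DifferentiableOn.diffContOnCl fun z hz => ?_
    have hz' := him z (hUK hz)
    have hs : 1 + z ∈ slitPlane := Or.inr (by simpa using hz'.ne')
    have hz0 : z ^ 2 ≠ 0 := by
      refine pow_ne_zero 2 ?_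
      rintro rfl
      simp at hz'
    refine DifferentiableAt.differentiableWithinAt ?_
    fun_prop (disch := assumption)
  have hmax := norm_le_of_forall_mem_frontier_norm_le hbd hd (C := 3 / 4) (fun z hz => ?_)
    (subset_closure (show w ∈ U from ⟨hlt, hr, h0, hs⟩))
  · rw [norm_div, norm_pow] at hmax
    exact (div_le_iff₀ (by positivity)).1 hmax
  · rw [hU.frontier_eq] at hz
    obtain ⟨z1, z2, z3, z4⟩ := hUK hz.1
    have hz' := him z (hUK hz.1)
    rw [norm_div, norm_pow]
    refine div_le_of_le_mul₀ (by positivity) (by norm_num) ?_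
    rcases z1.lt_or_eq with y1 | y1
    · rcases z2.lt_or_eq with y2 | y2
      · have y4 : z.im = -(9/10) * z.re :=
          z4.eq_of_not_lt fun y4 => hz.2 ⟨y1, y2, hz', y4⟩
        rw [← formula z hz'.ne']
        exact sect z (by rw [abs_of_pos hz', y4])
      · rw [← formula z hz'.ne']
        exact small z (by rw [abs_of_pos hz']; exact z1) y2.ge
    · exact line' z y1.symm z2 z3 z4

/-- For all complex `w = u + iv` with `u + |v| ≥ -1/2`, the integral of `t²/(1+t)`
along the straight segment from `0` to `w` satisfies `|∫₀^w t²/(1+t) dt| ≤ (3/4)|w|²`. -/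
theorem stmt_0 (w : ℂ) (hw : w.re + |w.im| ≥ -1/2) :
    ‖∫ t in (0:ℝ)..1, w * (((t : ℂ) * w)^2 / (1 + (t : ℂ) * w))‖ ≤ 3/4 * ‖w‖^2 := by
  rcases le_or_gt ‖w‖ (9/10) with hr | hr
  · exact small w hw hr
  rcases le_or_gt (-(9/10) * w.re) |w.im| with hs | hs
  · exact sect w hs
  have him : w.im ≠ 0 := by
    intro h
    have hn : ‖w‖ ^ 2 = w.re ^ 2 + w.im ^ 2 := by
      rw [← normSq_eq_norm_sq, normSq_apply]; ring
    rw [h, abs_zero] at hw hs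
    rw [h] at hn
    nlinarith [pow_le_pow_left₀ (by norm_num) hr.le 2]
  rw [formula w him]
  rcases him.lt_or_gt with h | h
  · -- The lower half-plane is reduced to the upper one by conjugation.
    rw [abs_of_neg h] at hw hs
    have key := upper (starRingEnd ℂ w) (by simpa using hw) (by simpa using hr) (by simpa using h)
      (by simpa using hs)
    have harg : (1 + w).arg ≠ Real.pi := fun e => by
      have := (arg_eq_pi_iff.1 e).2
      simp [h.ne] at this
    have e : log (1 + starRingEnd ℂ w) - starRingEnd ℂ w + (starRingEnd ℂ w) ^ 2 / 2
        = starRingEnd ℂ (log (1 + w) - w + w ^ 2 / 2) := by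
      rw [map_add, map_sub, ← log_conj _ harg, map_div₀, map_ofNat]
      simp
    rwa [e, norm_conj, norm_conj] at key
  · rw [abs_of_pos h] at hw hs
    exact upper w hw hr h hs
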